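/- On F ⊗ F ⊗ F, the operators ξ₁ = (1−q²)⁻¹ (a⁺k⁻¹ ⊗ 1 ⊗ 1) and ξ₂ = (1−q²)⁻¹ (a⁻ ⊗ a⁺k⁻¹ ⊗ 1 + k ⊗ k⁻¹ ⊗ a⁺k⁻¹) satisfy the q-Serre relations of type A₂: ξ₁²ξ₂ − (q+q⁻¹) ξ₁ξ₂ξ₁ + ξ₂ξ₁² = 0 and ξ₂²ξ₁ − (q+q⁻¹) ξ₂ξ₁ξ₂ + ξ₁ξ₂² = 0. -/

import Mathlib

noncomputable section

/-- The base field `K = ℚ(q)`, rational functions over `ℚ`. -/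
abbrev K : Type := RatFunc ℚ

/-- The indeterminate `q`. -/
def q : K := RatFunc.X

/-- The Fock space `F` with basis `|m⟩, m ∈ ℕ`. -/
abbrev F : Type := ℕ →₀ K

/-- The basis vector `|m⟩`. -/
def ket (m : ℕ) : F := Finsupp.single m 1

/-- The operator `k : |m⟩ ↦ q^m |m⟩`. -/
def opK : Module.End K F := Finsupp.lift F K ℕ fun m => (q ^ m) • ket m

/-- The operator `a⁺ : |m⟩ ↦ |m+1⟩`. -/
def opAp : Module.End K F := Finsupp.lift F K ℕ fun m => ket (m + 1)

/-- The operator `a⁻ : |m⟩ ↦ (1 - q^{2m}) |m-1⟩` (so `a⁻|0⟩ = 0`). -/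
def opAm : Module.End K F := Finsupp.lift F K ℕ fun m => (1 - q ^ (2 * m)) • ket (m - 1)

/-- The inverse `k⁻¹ : |m⟩ ↦ q^{-m} |m⟩` of the operator `k`. -/
def opKInv : Module.End K F := Finsupp.lift F K ℕ fun m => (q ^ m)⁻¹ • ket m

/-- The `q`-integer `[m]₁ = (q^m - q^{-m})/(q - q⁻¹)`. -/
def qint (n : ℕ) : K := (q ^ n - q⁻¹ ^ n) / (q - q⁻¹)

open TensorProduct

/-- The triple tensor product `F ⊗ F ⊗ F`. -/
abbrev T3 : Type := F ⊗[K] (F ⊗[K] F)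

instance : AddCommGroup T3 := by
  exact @TensorProduct.addCommGroup K _ F (F ⊗[K] F) _ _ _ _

/-- `f ⊗ g ⊗ h` as an operator on `F ⊗ F ⊗ F`. -/
def tens3 (f g h : Module.End K F) : Module.End K T3 :=
  TensorProduct.map f (TensorProduct.map g h)

/-- The operator `ξ₁ = (1−q²)⁻¹ (a⁺k⁻¹ ⊗ 1 ⊗ 1)`. -/
def xi1 : Module.End K T3 := (1 - q ^ 2)⁻¹ • tens3 (opAp * opKInv) 1 1

/-- The operator `ξ₂ = (1−q²)⁻¹ (a⁻ ⊗ a⁺k⁻¹ ⊗ 1 + k ⊗ k⁻¹ ⊗ a⁺k⁻¹)`. -/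
def xi2 : Module.End K T3 :=
  (1 - q ^ 2)⁻¹ • (tens3 opAm (opAp * opKInv) 1 + tens3 opK opKInv (opAp * opKInv))

/-!
With `[y, x]_q = y x - q x y`, both Serre polynomials are iterated `q`-commutators, so they vanish
as soon as `w = [y, x]_q` satisfies `x w = q w x` and `y w = q⁻¹ w y`. Group the last two tensor
factors: `ξ₁` is a multiple of `b ⊗ 1` with `b = a⁺k⁻¹`, and `ξ₂` is a multiple of `a⁻ ⊗ u + k ⊗ v`
with `u = b ⊗ 1` and `v = k⁻¹ ⊗ b`, so that `v u = q⁻¹ u v`. The term `k ⊗ v` drops out of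
`[ξ₂, ξ₁]_q` because `k b = q b k`, and `[a⁻, b]_q = (1 - q²) k⁻¹`; hence `w` is a multiple of
`k⁻¹ ⊗ u`, which visibly `q`-commutes with `ξ₁` and `ξ₂` in the required way.
-/

/-- The relation `x y = c y x`: the elements `x` and `y` commute up to the scalar `c`. -/
def QCommute {R A : Type*} [CommSemiring R] [Semiring A] [Algebra R A] (c : R) (x y : A) : Prop :=
  x * y = c • (y * x)

namespace QCommute

section Algebra

variable {R A : Type*} [CommSemiring R] [Semiring A] [Algebra R A] {c d : R} {x y z : A}

theorem of_commute (h : Commute x y) : QCommute (1 : R) x y := by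
  rw [QCommute, one_smul, h.eq]

theorem add_left (hx : QCommute c x z) (hy : QCommute c y z) : QCommute c (x + y) z := by
  rw [QCommute, add_mul, hx, hy, mul_add, smul_add]

theorem smul (h : QCommute c x y) (s t : R) : QCommute c (s • x) (t • y) := by
  rw [QCommute, smul_mul_smul_comm, h, smul_mul_smul_comm, smul_comm, mul_comm s t]

theorem mul_right (hy : QCommute c x y) (hz : QCommute d x z) : QCommute (c * d) x (y * z) := by
  rw [QCommute, ← mul_assoc, hy, smul_mul_assoc, mul_assoc, hz, mul_smul_comm, smul_smul, mul_assoc]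

theorem symm {c : Rˣ} (h : QCommute (c : R) x y) : QCommute (↑c⁻¹ : R) y x := by
  rw [QCommute, h, smul_smul, Units.inv_mul, one_smul]

theorem units_inv_left {c : Rˣ} {u : Aˣ} (h : QCommute (c : R) (u : A) x) :
    QCommute (↑c⁻¹ : R) (↑u⁻¹ : A) x := by
  rw [QCommute, Units.inv_mul_eq_iff_eq_mul, mul_smul_comm, ← mul_assoc, h, smul_mul_assoc,
    smul_smul, Units.inv_mul, one_smul, Units.mul_inv_cancel_right]

end Algebra

variable {R M N : Type*} [CommSemiring R] [AddCommMonoid M] [Module R M] [AddCommMonoid N]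
  [Module R N] {c d : R} {f f' : Module.End R M} {g g' : Module.End R N}

theorem tensorMap (hf : QCommute c f f') (hg : QCommute d g g') :
    QCommute (c * d) (TensorProduct.map f g) (TensorProduct.map f' g') := by
  rw [QCommute, ← TensorProduct.map_mul, hf, hg, TensorProduct.map_smul_left,
    TensorProduct.map_smul_right, smul_smul, TensorProduct.map_mul]

theorem tensorMap_one (hf : QCommute c f f') (g : Module.End R N) :
    QCommute c (TensorProduct.map f g) (TensorProduct.map f' 1) := by
  simpa only [mul_one] using hf.tensorMap (of_commute (Commute.one_right g))

end QCommute

section QCommutator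

variable {R A : Type*} [CommRing R] [Ring A] [Algebra R A]

/-- The `q`-commutator `[x, y]_c = x y - c y x`, the failure of `x` and `y` to commute up to `c`. -/
def qCommutator (c : R) (x y : A) : A := x * y - c • (y * x)

theorem qCommutator_eq_zero_iff {c : R} {x y : A} : qCommutator c x y = 0 ↔ QCommute c x y :=
  sub_eq_zero

theorem add_qCommutator (c : R) (x y z : A) :
    qCommutator c (x + y) z = qCommutator c x z + qCommutator c y z := by
  simp only [qCommutator, add_mul, mul_add, smul_add]
  abel

theorem smul_qCommutator_smul (c s t : R) (x y : A) :
    qCommutator c (s • x) (t • y) = (s * t) • qCommutator c x y := by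
  simp only [qCommutator, smul_mul_smul_comm, smul_sub, smul_comm c, mul_comm t s]

theorem qCommutator_inv_swap (c : Rˣ) (x y : A) :
    qCommutator (↑c⁻¹ : R) x y = -(↑c⁻¹ : R) • qCommutator (c : R) y x := by
  simp only [qCommutator, smul_sub, smul_smul, neg_mul, Units.inv_mul, neg_smul, one_smul]
  abel

theorem qCommutator_inv_qCommutator (c : Rˣ) (x y : A) :
    qCommutator (↑c⁻¹ : R) x (qCommutator (c : R) x y) =
      x ^ 2 * y - ((c : R) + ↑c⁻¹) • (x * y * x) + y * x ^ 2 := by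
  simp only [qCommutator, mul_sub, sub_mul, mul_smul_comm, smul_mul_assoc, smul_sub, smul_smul,
    Units.inv_mul, one_smul, add_smul, pow_two, mul_assoc]
  abel

theorem qSerre_of_qCommute_qCommutator {c : Rˣ} {x y : A}
    (hx : QCommute (c : R) x (qCommutator (c : R) y x))
    (hy : QCommute (↑c⁻¹ : R) y (qCommutator (c : R) y x)) :
    x ^ 2 * y - ((c : R) + ↑c⁻¹) • (x * y * x) + y * x ^ 2 = 0 ∧
    y ^ 2 * x - ((c : R) + ↑c⁻¹) • (y * x * y) + x * y ^ 2 = 0 := by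
  constructor
  · have hx' : QCommute (c : R) x (qCommutator (↑c⁻¹ : R) x y) := by
      simpa only [qCommutator_inv_swap, one_smul] using hx.smul 1 (-(↑c⁻¹ : R))
    rw [← qCommutator_eq_zero_iff] at hx'
    simpa only [inv_inv, add_comm, hx'] using (qCommutator_inv_qCommutator c⁻¹ x y).symm
  · rw [← qCommutator_inv_qCommutator, qCommutator_eq_zero_iff]
    exact hy

end QCommutator

theorem qCommutator_tensorMap_one {R M N : Type*} [CommRing R] [AddCommGroup M] [Module R M]
    [AddCommGroup N] [Module R N] (c : R) (f f' : Module.End R M) (g : Module.End R N) :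
    qCommutator c (TensorProduct.map f g) (TensorProduct.map f' 1) =
      TensorProduct.map (qCommutator c f f') g := by
  rw [qCommutator, ← TensorProduct.map_mul, ← TensorProduct.map_mul, mul_one, one_mul,
    ← TensorProduct.map_smul_left, sub_eq_iff_eq_add, ← TensorProduct.map_add_left, qCommutator,
    sub_add_cancel]

/-- The defining relations of the `q`-oscillator algebra, in a form where `a⁺a⁻ = 1 - k²` and
`a⁻a⁺ = 1 - q²k²` are weakened to their consequence `a⁻a⁺ - q² a⁺a⁻ = 1 - q²`. -/
structure IsQOscillator {R A : Type*} [CommRing R] [Ring A] [Algebra R A]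
    (q : Rˣ) (k : Aˣ) (ap am : A) : Prop where
  qCommute_ap : QCommute (q : R) (k : A) ap
  qCommute_am : QCommute (↑q⁻¹ : R) (k : A) am
  qCommutator_am_ap : qCommutator ((q : R) ^ 2) am ap = (1 - (q : R) ^ 2) • 1

namespace IsQOscillator

section Algebra

variable {R A : Type*} [CommRing R] [Ring A] [Algebra R A] {q : Rˣ} {k : Aˣ} {ap am : A}

theorem qCommute_ap_mul_inv (h : IsQOscillator q k ap am) :
    QCommute (q : R) (k : A) (ap * ↑k⁻¹) := by
  have hk : Commute (k : A) ↑k⁻¹ := (Commute.refl _).units_inv_right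
  simpa only [mul_one] using h.qCommute_ap.mul_right (QCommute.of_commute hk)

theorem inv_qCommute_am (h : IsQOscillator q k ap am) : QCommute (q : R) (↑k⁻¹ : A) am := by
  simpa only [inv_inv] using h.qCommute_am.units_inv_left

theorem qCommutator_am_ap_mul_inv (h : IsQOscillator q k ap am) :
    qCommutator (q : R) am (ap * ↑k⁻¹) = (1 - (q : R) ^ 2) • (↑k⁻¹ : A) :=
  calc qCommutator (q : R) am (ap * ↑k⁻¹)
      = qCommutator ((q : R) ^ 2) am ap * ↑k⁻¹ := by
        rw [qCommutator, qCommutator, mul_assoc ap, h.inv_qCommute_am, mul_smul_comm, smul_smul,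
          sub_mul, smul_mul_assoc, pow_two, mul_assoc, mul_assoc]
    _ = (1 - (q : R) ^ 2) • (↑k⁻¹ : A) := by
        rw [h.qCommutator_am_ap, smul_mul_assoc, one_mul]

end Algebra

variable {R M N : Type*} [CommRing R] [AddCommGroup M] [Module R M] [AddCommGroup N] [Module R N]
  {q : Rˣ} {k : (Module.End R M)ˣ} {ap am : Module.End R M}

theorem qCommutator_map_add_map (h : IsQOscillator q k ap am) (u v : Module.End R N) :
    qCommutator (q : R)
        (TensorProduct.map am u + TensorProduct.map (k : Module.End R M) v)
        (TensorProduct.map (ap * (↑k⁻¹ : Module.End R M)) 1) =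
      (1 - (q : R) ^ 2) • TensorProduct.map (↑k⁻¹ : Module.End R M) u := by
  rw [add_qCommutator, qCommutator_tensorMap_one, qCommutator_tensorMap_one,
    h.qCommutator_am_ap_mul_inv, qCommutator_eq_zero_iff.2 h.qCommute_ap_mul_inv,
    TensorProduct.map_zero_left, add_zero, TensorProduct.map_smul_left]

theorem qCommute_map_ap_mul_inv_one (h : IsQOscillator q k ap am) (u : Module.End R N) :
    QCommute (q : R) (TensorProduct.map (ap * (↑k⁻¹ : Module.End R M)) 1)
      (TensorProduct.map (↑k⁻¹ : Module.End R M) u) := by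
  have hb : QCommute (q : R) (ap * (↑k⁻¹ : Module.End R M)) (↑k⁻¹ : Module.End R M) := by
    simpa only [inv_inv] using h.qCommute_ap_mul_inv.units_inv_left.symm
  simpa only [mul_one] using hb.tensorMap (QCommute.of_commute (Commute.one_left u))

theorem qCommute_map_am_add_map (h : IsQOscillator q k ap am) {u v : Module.End R N}
    (huv : QCommute (↑q⁻¹ : R) v u) :
    QCommute (↑q⁻¹ : R) (TensorProduct.map am u + TensorProduct.map (k : Module.End R M) v)
      (TensorProduct.map (↑k⁻¹ : Module.End R M) u) := by
  have hk : Commute (k : Module.End R M) ↑k⁻¹ := (Commute.refl _).units_inv_right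
  refine QCommute.add_left ?_ ?_
  · simpa only [mul_one] using
      h.inv_qCommute_am.symm.tensorMap (QCommute.of_commute (Commute.refl u))
  · simpa only [one_mul] using (QCommute.of_commute hk).tensorMap huv

end IsQOscillator

theorem statement10_general {R M N : Type*} [CommRing R] [AddCommGroup M] [Module R M]
    [AddCommGroup N] [Module R N] {q : Rˣ} {k : (Module.End R M)ˣ} {ap am : Module.End R M}
    (h : IsQOscillator q k ap am) {u v : Module.End R N} (huv : QCommute (↑q⁻¹ : R) v u)
    (s t : R) :
    let x : Module.End R (M ⊗[R] N) := s • TensorProduct.map (ap * (↑k⁻¹ : Module.End R M)) 1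
    let y : Module.End R (M ⊗[R] N) :=
      t • (TensorProduct.map am u + TensorProduct.map (k : Module.End R M) v)
    x ^ 2 * y - ((q : R) + ↑q⁻¹) • (x * y * x) + y * x ^ 2 = 0 ∧
    y ^ 2 * x - ((q : R) + ↑q⁻¹) • (y * x * y) + x * y ^ 2 = 0 := by
  intro x y
  have hw : qCommutator (q : R) y x =
      (t * s * (1 - (q : R) ^ 2)) • TensorProduct.map (↑k⁻¹ : Module.End R M) u := by
    rw [smul_qCommutator_smul, h.qCommutator_map_add_map, smul_smul]
  apply qSerre_of_qCommute_qCommutator <;> rw [hw]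
  · exact (h.qCommute_map_ap_mul_inv_one u).smul _ _
  · exact (h.qCommute_map_am_add_map huv).smul _ _

section Fock

theorem lift_ket (f : ℕ → F) (m : ℕ) : Finsupp.lift F K ℕ f (ket m) = f m := by
  simp [ket]

theorem opK_ket (m : ℕ) : opK (ket m) = q ^ m • ket m := lift_ket _ m

theorem opKInv_ket (m : ℕ) : opKInv (ket m) = (q ^ m)⁻¹ • ket m := lift_ket _ m

theorem opAp_ket (m : ℕ) : opAp (ket m) = ket (m + 1) := lift_ket _ m

theorem opAm_ket_zero : opAm (ket 0) = 0 := by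
  rw [opAm, lift_ket, mul_zero, pow_zero, sub_self, zero_smul]

theorem opAm_ket_succ (m : ℕ) : opAm (ket (m + 1)) = (1 - q ^ (2 * (m + 1))) • ket m :=
  lift_ket _ (m + 1)

theorem hom_ext_ket {M : Type*} [AddCommMonoid M] [Module K M] {f g : F →ₗ[K] M}
    (h : ∀ m, f (ket m) = g (ket m)) : f = g :=
  Finsupp.lhom_ext' fun m => LinearMap.ext_ring (h m)

theorem q_ne_zero : q ≠ 0 := RatFunc.X_ne_zero

/-- The indeterminate `q` as a unit of `K`. -/
def qUnit : Kˣ := Units.mk0 q q_ne_zero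

/-- The operator `k` as a unit of `End F`, with inverse `k⁻¹`. -/
def opKUnit : (Module.End K F)ˣ where
  val := opK
  inv := opKInv
  val_inv := hom_ext_ket fun m => by
    simp [opK_ket, opKInv_ket, smul_smul, q_ne_zero]
  inv_val := hom_ext_ket fun m => by
    simp [opK_ket, opKInv_ket, smul_smul, q_ne_zero]

theorem qCommute_opK_opAp : QCommute q opK opAp :=
  hom_ext_ket fun m => by
    simp only [Module.End.mul_apply, LinearMap.smul_apply, opAp_ket, opK_ket, map_smul, smul_smul,
      pow_succ']

theorem qCommute_opK_opAm : QCommute q⁻¹ opK opAm := by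
  refine hom_ext_ket fun m => ?_
  simp only [Module.End.mul_apply, LinearMap.smul_apply, opK_ket, map_smul]
  cases m with
  | zero => simp only [opAm_ket_zero, map_zero, smul_zero]
  | succ m =>
    simp only [opAm_ket_succ, map_smul, opK_ket, smul_smul]
    congr 1
    rw [pow_succ']
    field_simp [q_ne_zero]

theorem qCommutator_opAm_opAp : qCommutator (q ^ 2) opAm opAp = (1 - q ^ 2) • 1 := by
  refine hom_ext_ket fun m => ?_
  simp only [qCommutator, LinearMap.sub_apply, Module.End.mul_apply, LinearMap.smul_apply,
    Module.End.one_apply, opAp_ket, opAm_ket_succ]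
  cases m with
  | zero => simp [opAm_ket_zero]
  | succ m =>
    rw [opAm_ket_succ, map_smul, opAp_ket, smul_smul, ← sub_smul]
    congr 1
    ring

theorem isQOscillator_fock : IsQOscillator qUnit opKUnit opAp opAm where
  qCommute_ap := qCommute_opK_opAp
  qCommute_am := qCommute_opK_opAm
  qCommutator_am_ap := qCommutator_opAm_opAp

-- Without this shortcut, the search for `Ring (Module.End K (F ⊗[K] F))` fails.
instance : AddCommGroup (F ⊗[K] F) := TensorProduct.addCommGroup

theorem xi1_eq_smul_map_one :
    xi1 = (1 - q ^ 2)⁻¹ • TensorProduct.map (opAp * opKInv) (1 : Module.End K (F ⊗[K] F)) := by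
  rw [xi1, tens3, TensorProduct.map_one]

end Fock

/-- `ξ₁, ξ₂` satisfy the `q`-Serre relations of type `A₂`. -/
theorem statement10 :
    xi1 ^ 2 * xi2 - (q + q⁻¹) • (xi1 * xi2 * xi1) + xi2 * xi1 ^ 2 = 0 ∧
    xi2 ^ 2 * xi1 - (q + q⁻¹) • (xi2 * xi1 * xi2) + xi1 * xi2 ^ 2 = 0 := by
  rw [xi1_eq_smul_map_one]
  exact statement10_general isQOscillator_fock
    (isQOscillator_fock.qCommute_ap_mul_inv.units_inv_left.tensorMap_one _) _ _
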